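/- Let A ∈ ℝ^{m×n} and N ⊆ [n] be such that the submatrix A_{[n]\N} (columns indexed by [n] \ N) has linearly independent columns. Then for every z ∈ ker(A), ‖z‖_∞ ≤ κ_A · ‖z_N‖₁. -/

import Mathlib

open Matrix
open scoped BigOperators

noncomputable section
open Classical

/-- The set of elementary vectors of `ker(A)`: support-minimal nonzero kernel vectors. -/
def elemVecs {α β : Type} [Fintype α] [Fintype β] (A : Matrix α β ℝ) : Set (β → ℝ) :=
  {g | A.mulVec g = 0 ∧ g ≠ 0 ∧
    ∀ h : β → ℝ, A.mulVec h = 0 → h ≠ 0 →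
      ¬ ({i | h i ≠ 0} ⊂ {i | g i ≠ 0})}

/-- The circuit imbalance measure `κ_A`. -/
def circImb {α β : Type} [Fintype α] [Fintype β] (A : Matrix α β ℝ) : ℝ :=
  sSup {r : ℝ | ∃ g ∈ elemVecs A, ∃ i j, g i ≠ 0 ∧ g j ≠ 0 ∧ r = |g j| / |g i|}

lemma aux_step {n : ℕ} (z h : Fin n → ℝ) (i0 : Fin n) (h0 : 0 < h i0 * z i0) :
    ∃ t : ℝ, 0 < t ∧ (∀ i, 0 ≤ (z i - t * h i) * z i) ∧ ∃ k, z k ≠ 0 ∧ z k - t * h k = 0 := by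
  obtain ⟨k, hk, hmin⟩ := Finset.exists_min_image
    (Finset.univ.filter (fun i => 0 < h i * z i)) (fun i => z i / h i) ⟨i0, by simpa using h0⟩
  simp only [Finset.mem_filter, Finset.mem_univ, true_and] at hk hmin
  have hhk : h k ≠ 0 := by rintro h; simp [h] at hk
  have hzk : z k ≠ 0 := by rintro h; simp [h] at hk
  have key : ∀ i, h i ≠ 0 → z i / h i * (h i * z i) = z i * z i := by
    intro i hi; field_simp
  have hpos : 0 < z k / h k := by
    have h1 : z k / h k = h k * z k / (h k ^ 2) := by field_simp
    rw [h1]; positivity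
  refine ⟨z k / h k, hpos, ?_, k, hzk, by field_simp; ring⟩
  intro i
  by_cases hi : 0 < h i * z i
  · have hhi : h i ≠ 0 := by rintro h; simp [h] at hi
    have := mul_le_mul_of_nonneg_right (hmin i hi) hi.le
    rw [key i hhi] at this
    nlinarith
  · have : z k / h k * (h i * z i) ≤ 0 := mul_nonpos_of_nonneg_of_nonpos hpos.le (not_lt.mp hi)
    nlinarith [mul_self_nonneg (z i)]

lemma aux_abs {x y z : ℝ} (hz : z = x + y) (hx : 0 ≤ x * z) (hy : 0 ≤ y * z)
    (h0 : z = 0 → x = 0) : |z| = |x| + |y| := by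
  by_cases h : z = 0
  · have := h0 h
    have hy : y = 0 := by linarith
    simp [h, this, hy]
  · rcases lt_or_gt_of_ne h with h | h
    · have hx : x ≤ 0 := by nlinarith
      have hy : y ≤ 0 := by nlinarith
      rw [abs_of_neg h, abs_of_nonpos hx, abs_of_nonpos hy]; linarith
    · have hx : 0 ≤ x := by nlinarith
      have hy : 0 ≤ y := by nlinarith
      rw [abs_of_pos h, abs_of_nonneg hx, abs_of_nonneg hy]; linarith

lemma aux_ssub {n : ℕ} {x z : Fin n → ℝ} (h : ∀ i, z i = 0 → x i = 0) (k : Fin n)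
    (hk : z k ≠ 0) (hx : x k = 0) : {i | x i ≠ 0} ⊂ {i | z i ≠ 0} := by
  have hsub : {i | x i ≠ 0} ⊆ {i | z i ≠ 0} := fun i hi hz => hi (h i hz)
  refine (Set.ssubset_iff_of_subset hsub).2 ⟨k, hk, ?_⟩
  simpa using hx

lemma aux_split {n : ℕ} (z h : Fin n → ℝ) (hn : h ≠ 0)
    (hs : {i | h i ≠ 0} ⊂ {i | z i ≠ 0}) :
    ∃ a b c d : ℝ, z = (a • z + b • h) + (c • z + d • h) ∧
      (∀ i, |z i| = |(a • z + b • h) i| + |(c • z + d • h) i|) ∧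
      {i | (a • z + b • h) i ≠ 0} ⊂ {i | z i ≠ 0} ∧
      {i | (c • z + d • h) i ≠ 0} ⊂ {i | z i ≠ 0} := by
  have hsup : ∀ i, z i = 0 → h i = 0 := by
    intro i hi
    by_contra hc
    exact hs.1 hc hi
  have hcomb : ∀ a b : ℝ, ∀ i, z i = 0 → (a • z + b • h) i = 0 := by
    intro a b i hi
    simp [hi, hsup i hi]
  have one : ∀ h : Fin n → ℝ, h ≠ 0 → {i | h i ≠ 0} ⊂ {i | z i ≠ 0} →
      (∀ i, z i = 0 → h i = 0) → (∀ i, 0 ≤ h i * z i) →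
      ∃ t : ℝ, z = ((1:ℝ) • z + (-t) • h) + ((0:ℝ) • z + t • h) ∧
      (∀ i, |z i| = |((1:ℝ) • z + (-t) • h) i| + |((0:ℝ) • z + t • h) i|) ∧
      {i | ((1:ℝ) • z + (-t) • h) i ≠ 0} ⊂ {i | z i ≠ 0} ∧
      {i | ((0:ℝ) • z + t • h) i ≠ 0} ⊂ {i | z i ≠ 0} := by
    intro h hn hs hsup hc
    obtain ⟨i0, hi0⟩ := Function.ne_iff.1 hn
    have hzi0 : z i0 ≠ 0 := fun hz => hi0 (hsup i0 hz)
    obtain ⟨t, ht, hcf, k, hk, hk0⟩ := aux_step z h i0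
      (lt_of_le_of_ne (hc i0) (Ne.symm (mul_ne_zero hi0 hzi0)))
    have e : z = ((1:ℝ) • z + (-t) • h) + ((0:ℝ) • z + t • h) := by
      ext i; simp
    refine ⟨t, e, ?_, ?_, ?_⟩
    · intro i
      apply aux_abs (congrFun e i)
      · have := hcf i
        simp; linarith
      · have := mul_nonneg ht.le (hc i)
        simp; linarith
      · intro hz; simp [hz, hsup i hz]
    · refine aux_ssub (fun i hi => by simp [hi, hsup i hi]) k hk ?_
      simp; linarith
    · obtain ⟨_, k, hk1, hk2⟩ := (Set.ssubset_iff_exists).1 hs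
      refine aux_ssub (fun i hi => by simp [hi, hsup i hi]) k hk1 ?_
      have : h k = 0 := by simpa using hk2
      simp [this]
  by_cases hp : ∀ i, 0 ≤ h i * z i
  · obtain ⟨t, ht⟩ := one h hn hs hsup hp
    exact ⟨_, _, _, _, ht⟩
  by_cases hq : ∀ i, 0 ≤ (-h) i * z i
  · obtain ⟨t, ht⟩ := one (-h) (neg_ne_zero.2 hn) (by simpa using hs) (by simpa using hsup) hq
    refine ⟨1, t, 0, -t, ?_⟩
    simpa only [smul_neg, neg_smul, neg_neg] using ht
  push Not at hp hq
  obtain ⟨i1, h1⟩ := hp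
  obtain ⟨i2, h2⟩ := hq
  obtain ⟨t, ht, htc, k, hk, hk0⟩ := aux_step z h i2 (by simp at h2; linarith)
  obtain ⟨s, hs', hsc, l, hl, hl0⟩ := aux_step z (-h) i1 (by simp; linarith)
  have hst : 0 < s + t := by positivity
  have e : z = ((s/(s+t)) • z + (-(s/(s+t)*t)) • h) + ((t/(s+t)) • z + (t/(s+t)*s) • h) := by
    ext i
    simp
    field_simp
    ring
  refine ⟨_, _, _, _, e, ?_, ?_, ?_⟩
  · intro i
    apply aux_abs (congrFun e i)
    · have := mul_nonneg (div_pos hs' hst).le (htc i)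
      simp; linarith
    · have := mul_nonneg (div_pos ht hst).le (hsc i)
      simp at this ⊢; linarith
    · exact hcomb _ _ i
  · refine aux_ssub (hcomb _ _) k hk ?_
    simp
    linear_combination (s/(s+t)) * hk0
  · refine aux_ssub (hcomb _ _) l hl ?_
    simp at hl0 ⊢
    linear_combination (t/(s+t)) * hl0

lemma aux_prop {m n : ℕ} (A : Matrix (Fin m) (Fin n) ℝ) {g g' : Fin n → ℝ}
    (hg : g ∈ elemVecs A) (hg' : g' ∈ elemVecs A) (hs : {i | g i ≠ 0} = {i | g' i ≠ 0}) :
    ∃ c : ℝ, c ≠ 0 ∧ g' = c • g := by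
  obtain ⟨i0, hi0⟩ := Function.ne_iff.1 hg.2.1
  have hss : ∀ i, g i ≠ 0 ↔ g' i ≠ 0 := fun i => Set.ext_iff.1 hs i
  have hi0 : g i0 ≠ 0 := hi0
  have hi0' := (hss i0).1 hi0
  refine ⟨g' i0 / g i0, div_ne_zero hi0' hi0, ?_⟩
  by_contra hne
  refine hg.2.2 (g' - (g' i0 / g i0) • g) ?_ (sub_ne_zero.2 hne) ?_
  · rw [Matrix.mulVec_sub, Matrix.mulVec_smul, hg.1, hg'.1]; simp
  · refine aux_ssub ?_ i0 hi0 ?_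
    · intro i hi
      have : g' i = 0 := by
        by_contra hc
        exact (hss i).2 hc hi
      simp [hi, this]
    · simp [hi0]

lemma aux_bdd {m n : ℕ} (A : Matrix (Fin m) (Fin n) ℝ) :
    BddAbove {r : ℝ | ∃ g ∈ elemVecs A, ∃ i j, g i ≠ 0 ∧ g j ≠ 0 ∧ r = |g j| / |g i|} := by
  let f : Set (Fin n) × Fin n × Fin n → ℝ := fun p =>
    if h : ∃ g ∈ elemVecs A, {i | g i ≠ 0} = p.1 then
      |h.choose p.2.2| / |h.choose p.2.1| else 0
  refine ((Set.finite_range f).subset ?_).bddAbove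
  rintro r ⟨g, hg, i, j, hi, hj, rfl⟩
  refine ⟨({i | g i ≠ 0}, i, j), ?_⟩
  have h : ∃ g' ∈ elemVecs A, {i | g' i ≠ 0} = {i | g i ≠ 0} := ⟨g, hg, rfl⟩
  have hf : f ({i | g i ≠ 0}, i, j) = |h.choose j| / |h.choose i| := dif_pos h
  rw [hf]
  obtain ⟨c, hc, he⟩ := aux_prop A hg h.choose_spec.1 h.choose_spec.2.symm
  rw [he]
  simp only [Pi.smul_apply, smul_eq_mul, abs_mul]
  exact mul_div_mul_left _ _ (abs_ne_zero.2 hc)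

lemma aux_nonneg {m n : ℕ} (A : Matrix (Fin m) (Fin n) ℝ) : 0 ≤ circImb A := by
  apply Real.sSup_nonneg
  rintro r ⟨g, hg, i, j, hi, hj, rfl⟩
  positivity

lemma aux_meet {m n : ℕ} (A : Matrix (Fin m) (Fin n) ℝ) (N : Finset (Fin n))
    (hInd : LinearIndependent ℝ (fun i : {i : Fin n // i ∉ N} => A.transpose i.val))
    (z : Fin n → ℝ) (hz : A.mulVec z = 0) (hne : z ≠ 0) : ∃ j ∈ N, z j ≠ 0 := by
  by_contra! hN
  apply hne
  have h1 := Fintype.linearIndependent_iff.1 hInd (fun i => z i.val) (by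
    ext k
    have h2 := congrFun hz k
    simp only [Matrix.mulVec, dotProduct, Pi.zero_apply] at h2
    simp only [Finset.sum_apply, Pi.smul_apply, Matrix.transpose_apply, smul_eq_mul, Pi.zero_apply]
    rw [← h2, ← Finset.sum_subtype (Finset.univ.filter (fun i => i ∉ N)) (by simp)
      (fun i => z i * A k i), Finset.sum_filter]
    refine Finset.sum_congr rfl fun i _ => ?_
    by_cases hi : i ∈ N
    · simp [hi, hN i hi]
    · simp [hi, mul_comm])
  ext i
  by_cases hi : i ∈ N
  · exact hN i hi
  · exact h1 ⟨i, hi⟩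

/-- If the columns of `A` outside `N` are linearly independent, then for every `z ∈ ker(A)`,
`‖z‖_∞ ≤ κ_A ‖z_N‖₁`. -/
theorem circuit_N_kappa {m n : ℕ} (A : Matrix (Fin m) (Fin n) ℝ) (N : Finset (Fin n))
    (hInd : LinearIndependent ℝ (fun i : {i : Fin n // i ∉ N} => A.transpose i.val))
    (z : Fin n → ℝ) (hz : A.mulVec z = 0) :
    ∀ i, |z i| ≤ circImb A * ∑ j ∈ N, |z j| := by
  induction hk : ({i | z i ≠ 0} : Set (Fin n)).ncard using Nat.strong_induction_on generalizing z with
  | _ k ih =>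
  intro i
  have hκ := aux_nonneg A
  by_cases hne : z = 0
  · simp [hne]
  by_cases hel : z ∈ elemVecs A
  · by_cases hi : z i = 0
    · rw [hi, abs_zero]
      exact mul_nonneg hκ (Finset.sum_nonneg fun j _ => abs_nonneg _)
    obtain ⟨j, hj, hzj⟩ := aux_meet A N hInd z hz hne
    have h1 : |z i| / |z j| ≤ circImb A := le_csSup (aux_bdd A) ⟨z, hel, j, i, hzj, hi, rfl⟩
    rw [div_le_iff₀ (abs_pos.2 hzj)] at h1
    exact h1.trans (mul_le_mul_of_nonneg_left
      (Finset.single_le_sum (f := fun j => |z j|) (fun j _ => abs_nonneg _) hj) hκ)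
  have hex : ∃ h : Fin n → ℝ, A.mulVec h = 0 ∧ h ≠ 0 ∧ {i | h i ≠ 0} ⊂ {i | z i ≠ 0} := by
    by_contra! hc
    exact hel ⟨hz, hne, hc⟩
  obtain ⟨h, hh, hn, hs⟩ := hex
  obtain ⟨a, b, c, d, -, habs, hx, hy⟩ := aux_split z h hn hs
  have hker : ∀ a b : ℝ, A.mulVec (a • z + b • h) = 0 := by
    intro a b
    rw [Matrix.mulVec_add, Matrix.mulVec_smul, Matrix.mulVec_smul, hz, hh]; simp
  have ix := ih _ (hk ▸ Set.ncard_lt_ncard hx (Set.toFinite _)) _ (hker a b) rfl i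
  have iy := ih _ (hk ▸ Set.ncard_lt_ncard hy (Set.toFinite _)) _ (hker c d) rfl i
  rw [habs i, Finset.sum_congr rfl (fun j _ => habs j), Finset.sum_add_distrib, mul_add]
  exact add_le_add ix iy
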